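/- arXiv:1704.08987 — 2 statements merged into one kernel-verified Lean document; each statement's English description precedes it below -/
import Mathlib

section
/- Let (X, d) be a metric space, A a nonempty closed subset of X, and define d_A†(u, v) := min( d(u, v), dist(u, A) + dist(v, A) ), where dist(u, A) := inf_{a∈A} d(u, a). Let x, y ∈ X \ A and assume there exists a geodesic from x to y avoiding A, i.e. a map f : [0, d(x, y)] → X with f(0) = x, f(d(x, y)) = y, d(f(s), f(t)) = |s − t| for all s, t ∈ [0, d(x, y)], and with image f([0, d(x, y)]) disjoint from A. Then d(x, y) equals the infimum, over all integers p ≥ 1 and all finite chains y₀ = x, y₁, …, y_p = y of points of X satisfying d_A†(y_{i−1}, y_i) < dist(y_{i−1}, A) + dist(y_i, A) for every 1 ≤ i ≤ p, of the sums ∑_{i=1}^p d_A†(y_{i−1}, y_i). -/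
/-!
A direct chain, one none of whose steps is shortened by the shortcut through the glued set, has
the same length for the glued pseudometric as for the original distance, so the triangle inequality
makes this length at least `dist x y`. Conversely, along a geodesic avoiding the set the cost of the
shortcut is positive and lower semicontinuous, so it exceeds the distance between any two close
enough points. By compactness a fine enough subdivision of the geodesic is a direct chain, and its
length telescopes to `dist x y`.
-/

open Set Topology

lemma exists_monotone_Icc_succ_mem_of_mem_nhdsSet_diagonal {a b : ℝ} (hab : a ≤ b)
    {S : Set (Icc a b × Icc a b)} (hS : S ∈ 𝓝ˢ (diagonal (Icc a b))) :
    ∃ t : ℕ → Icc a b, Monotone t ∧ t 0 = a ∧ (∃ m, ∀ n ≥ m, t n = b) ∧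
      ∀ n, (t n, t (n + 1)) ∈ S := by
  choose U hUo hsU hUS using TopologicalSpace.exists_open_prod_subset_of_mem_nhds_diagonal hS
  obtain ⟨t, hta, htmono, htb, htU⟩ := exists_monotone_Icc_subset_open_cover_Icc hab hUo
    fun s _ ↦ mem_iUnion.2 ⟨s, hsU s⟩
  refine ⟨t, htmono, hta, htb, fun n ↦ ?_⟩
  obtain ⟨s, hs⟩ := htU n
  have hle : t n ≤ t (n + 1) := htmono n.le_succ
  exact hUS s ⟨hs (left_mem_Icc.2 hle), hs (right_mem_Icc.2 hle)⟩

section ShortcutDist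

variable {X : Type*} [PseudoMetricSpace X] {r : X → ℝ} {x y : X}

lemma setOf_dist_lt_add_mem_nhdsSet_diagonal (hr : LowerSemicontinuous r) (hpos : ∀ u, 0 < r u) :
    {q : X × X | dist q.1 q.2 < r q.1 + r q.2} ∈ 𝓝ˢ (diagonal X) := by
  refine mem_nhdsSet_iff_forall.2 ?_
  rintro ⟨u, v⟩ (rfl : u = v)
  have hdist : ∀ᶠ q : X × X in 𝓝 (u, u), dist q.1 q.2 < r u :=
    continuous_dist.continuousAt.eventually_lt_const (by simpa using hpos u)
  have hhalf : ∀ᶠ v in 𝓝 u, r u / 2 < r v := hr u _ (half_lt_self (hpos u))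
  filter_upwards [hdist, hhalf.prodMk_nhds hhalf] with q hq ⟨hq₁, hq₂⟩
  exact hq.trans (by linarith)

/-- The distance after adding a base point at distance `r u` from each `u`: one travels directly or
through the base point. For `r = Metric.infDist · A` this is the pseudometric `d_A†` gluing `A` to
a single point. -/
def shortcutDist (r : X → ℝ) (u v : X) : ℝ := min (dist u v) (r u + r v)

/-- The lengths, for `shortcutDist r`, of the finite chains from `x` to `y` whose steps are all
strictly cheaper than the passage through the base point. A chain with `p` steps is encoded as a
sequence of which only the terms of index at most `p` matter. -/
def directChainLengths (r : X → ℝ) (x y : X) : Set ℝ :=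
  {s | ∃ p : ℕ, 1 ≤ p ∧ ∃ c : ℕ → X, c 0 = x ∧ c p = y ∧
    (∀ i < p, shortcutDist r (c i) (c (i + 1)) < r (c i) + r (c (i + 1))) ∧
    s = ∑ i ∈ Finset.range p, shortcutDist r (c i) (c (i + 1))}

lemma shortcutDist_lt_add_iff : shortcutDist r x y < r x + r y ↔ dist x y < r x + r y := by
  simp [shortcutDist]

lemma shortcutDist_eq_dist (h : dist x y ≤ r x + r y) : shortcutDist r x y = dist x y :=
  min_eq_left h

lemma mem_directChainLengths_iff_dist {s : ℝ} :
    s ∈ directChainLengths r x y ↔ ∃ p : ℕ, 1 ≤ p ∧ ∃ c : ℕ → X, c 0 = x ∧ c p = y ∧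
      (∀ i < p, dist (c i) (c (i + 1)) < r (c i) + r (c (i + 1))) ∧
      s = ∑ i ∈ Finset.range p, dist (c i) (c (i + 1)) := by
  simp only [directChainLengths, mem_ofPred_eq, shortcutDist_lt_add_iff]
  refine exists_congr fun p ↦ and_congr_right fun _ ↦ exists_congr fun c ↦
    and_congr_right fun _ ↦ and_congr_right fun _ ↦ and_congr_right fun hc ↦ ?_
  rw [Finset.sum_congr rfl fun i hi ↦ shortcutDist_eq_dist (hc i (Finset.mem_range.1 hi)).le]

lemma dist_mem_lowerBounds_directChainLengths :
    dist x y ∈ lowerBounds (directChainLengths r x y) := by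
  intro s hs
  obtain ⟨p, -, c, rfl, rfl, -, rfl⟩ := mem_directChainLengths_iff_dist.1 hs
  exact dist_le_range_sum_dist c p

end ShortcutDist

section Geodesic

variable {X : Type*} [PseudoMetricSpace X] {a b : ℝ} {f : Icc a b → X}

lemma sum_dist_succ_of_isometry_of_monotone (hf : Isometry f) {t : ℕ → Icc a b}
    (ht : Monotone t) (n : ℕ) :
    ∑ i ∈ Finset.range n, dist (f (t i)) (f (t (i + 1))) = dist (f (t 0)) (f (t n)) := by
  have dist_of_le {i j : ℕ} (hij : i ≤ j) : dist (f (t i)) (f (t j)) = (t j : ℝ) - t i := by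
    rw [hf.dist_eq, dist_comm, Subtype.dist_eq, Real.dist_eq, abs_of_nonneg]
    exact sub_nonneg.2 (ht hij)
  simp only [dist_of_le, Nat.le_succ, Nat.zero_le]
  exact Finset.sum_range_sub (fun i ↦ (t i : ℝ)) n

theorem dist_eq_sInf_chains_glued_general (hab : a ≤ b) (hf : Isometry f) {r : X → ℝ}
    (hr : LowerSemicontinuous (r ∘ f)) (hpos : ∀ t, 0 < r (f t)) {x y : X}
    (hx : f ⟨a, left_mem_Icc.2 hab⟩ = x) (hy : f ⟨b, right_mem_Icc.2 hab⟩ = y) :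
    IsLeast (directChainLengths r x y) (dist x y) := by
  refine ⟨mem_directChainLengths_iff_dist.2 ?_, dist_mem_lowerBounds_directChainLengths⟩
  obtain ⟨t, htmono, hta, ⟨m, htb⟩, ht⟩ :=
    exists_monotone_Icc_succ_mem_of_mem_nhdsSet_diagonal hab
      (setOf_dist_lt_add_mem_nhdsSet_diagonal hr hpos)
  have hfx : f (t 0) = x := (congrArg f (Subtype.ext hta)).trans hx
  have hfy : f (t (m + 1)) = y := (congrArg f (Subtype.ext (htb _ m.le_succ))).trans hy
  refine ⟨m + 1, m.succ_pos, f ∘ t, hfx, hfy, fun i _ ↦ (hf.dist_eq _ _).trans_lt (ht i), ?_⟩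
  rw [← hfx, ← hfy]
  exact (sum_dist_succ_of_isometry_of_monotone hf htmono (m + 1)).symm

end Geodesic

/-- Recovering the original distance from the glued-boundary pseudometric: if `x, y ∉ A` are
joined by a geodesic avoiding the closed set `A`, then `dist x y` equals the infimum of the sums
`∑ d'(c i, c (i+1))` over all finite chains from `x` to `y` whose consecutive points satisfy
`d'(c i, c (i+1)) < infDist (c i) A + infDist (c (i+1)) A`, where
`d'(u,v) = min (dist u v) (infDist u A + infDist v A)`. -/
theorem dist_eq_sInf_chains_glued
    {X : Type*} [MetricSpace X] (A : Set X) (hA : A.Nonempty) (hAc : IsClosed A)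
    (d' : X → X → ℝ)
    (hd' : ∀ u v, d' u v = min (dist u v) (Metric.infDist u A + Metric.infDist v A))
    (x y : X) (hx : x ∉ A) (hy : y ∉ A)
    (f : ℝ → X) (hf0 : f 0 = x) (hf1 : f (dist x y) = y)
    (hiso : ∀ s ∈ Set.Icc (0:ℝ) (dist x y), ∀ t ∈ Set.Icc (0:ℝ) (dist x y),
      dist (f s) (f t) = |s - t|)
    (havoid : ∀ t ∈ Set.Icc (0:ℝ) (dist x y), f t ∉ A) :
    dist x y = sInf {s : ℝ | ∃ p : ℕ, 1 ≤ p ∧ ∃ c : ℕ → X, c 0 = x ∧ c p = y ∧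
      (∀ i < p, d' (c i) (c (i+1)) < Metric.infDist (c i) A + Metric.infDist (c (i+1)) A) ∧
      s = ∑ i ∈ Finset.range p, d' (c i) (c (i+1))} := by
  obtain rfl : d' = shortcutDist (Metric.infDist · A) := funext₂ hd'
  have hf : Isometry fun t : Icc (0 : ℝ) (dist x y) ↦ f t :=
    .of_dist_eq fun s t ↦ hiso s s.2 t t.2
  have hr := ((Metric.continuous_infDist_pt A).comp hf.continuous).lowerSemicontinuous
  have hpos (t : Icc (0 : ℝ) (dist x y)) : 0 < Metric.infDist (f t) A :=
    (hAc.notMem_iff_infDist_pos hA).1 (havoid t t.2)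
  exact (dist_eq_sInf_chains_glued_general dist_nonneg hf hr hpos hf0 hf1).csInf_eq.symm
end

section
/- In the multiplicative-cascade setting below, assume m < 1/2. Then, P-almost surely, the supremum over all infinite sequences u ∈ {1, 2}^ℕ of the tail sums ∑_{k=ℓ}^∞ Z_{[u]_k} tends to 0 as ℓ → ∞, where [u]_k denotes the length-k prefix of u and the sums are taken in [0, ∞]. -/
open MeasureTheory Filter ENNReal

/-! Choose `d` with `2 m < d < 1`. By independence the level sums `M k = ∑_{|w| = k} Z_w ^ (5/2)`
have expectation `m (2 m) ^ k`, so `∑ k, M k / d ^ k` is integrable and almost surely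
`M k ≤ S d ^ k` for some finite random `S`. As a maximum is at most a sum,
`Z_w ≤ S ^ (2/5) (d ^ (2/5)) ^ k` for all words `w` of length `k`: the series along all branches are
dominated by one convergent geometric series, so their tails are uniformly small. -/

section ENNRealSeries

theorem tsum_ite_le_eq_tsum_add (a : ℕ → ℝ≥0∞) (ℓ : ℕ) :
    ∑' k, (if ℓ ≤ k then a k else 0) = ∑' k, a (k + ℓ) := by
  have hhead : ∑ k ∈ Finset.range ℓ, (if ℓ ≤ k then a k else 0) = 0 :=
    Finset.sum_eq_zero fun k hk => if_neg (Finset.mem_range.1 hk).not_ge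
  rw [← ENNReal.summable.sum_add_tsum_nat_add' (k := ℓ), hhead, zero_add]
  simp only [Nat.le_add_left, if_true]

theorem tendsto_iSup_tsum_ite_le_of_le {ι : Sort*} {a : ι → ℕ → ℝ≥0∞} {b : ℕ → ℝ≥0∞}
    (hab : ∀ i k, a i k ≤ b k) (hb : ∑' k, b k ≠ ∞) :
    Tendsto (fun ℓ : ℕ => ⨆ i, ∑' k, if ℓ ≤ k then a i k else 0) atTop (nhds 0) := by
  refine tendsto_of_tendsto_of_tendsto_of_le_of_le tendsto_const_nhds
    (ENNReal.tendsto_sum_nat_add b hb) (fun _ => zero_le) fun ℓ => iSup_le fun i => ?_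
  rw [tsum_ite_le_eq_tsum_add]
  exact ENNReal.tsum_le_tsum fun k => hab i (k + ℓ)

theorem tsum_mul_pow_ne_top {C r : ℝ≥0∞} (hC : C ≠ ∞) (hr : r < 1) : ∑' k, C * r ^ k ≠ ∞ := by
  rw [ENNReal.tsum_mul_left, ENNReal.tsum_geometric]
  exact mul_ne_top hC (inv_ne_top.2 (tsub_pos_of_lt hr).ne')

theorem tsum_rpow_ne_top_of_le_mul_pow {f : ℕ → ℝ≥0∞} {C r : ℝ≥0∞} {s : ℝ} (hC : C ≠ ∞)
    (hr : r < 1) (hs : 0 < s) (hf : ∀ k, f k ≤ C * r ^ k) : ∑' k, f k ^ s ≠ ∞ := by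
  refine ne_top_of_le_ne_top (tsum_mul_pow_ne_top (rpow_ne_top_of_nonneg hs.le hC)
    (rpow_lt_one hr hs)) (ENNReal.tsum_le_tsum fun k => ?_)
  calc f k ^ s ≤ (C * r ^ k) ^ s := rpow_le_rpow (hf k) hs.le
    _ = C ^ s * (r ^ s) ^ k := by
      rw [mul_rpow_of_nonneg _ _ hs.le, ← rpow_natCast_mul, mul_comm (k : ℝ), rpow_mul_natCast]

end ENNRealSeries

section Moments

variable {Ω : Type*} [MeasurableSpace Ω] {P : Measure Ω}

theorem ae_exists_forall_le_mul_pow_of_lintegral_le {f : ℕ → Ω → ℝ≥0∞} {C r d : ℝ≥0∞}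
    (hf : ∀ k, AEMeasurable (f k) P) (hC : C ≠ ∞) (hrd : r < d) (hd : d ≠ ∞)
    (hfC : ∀ k, ∫⁻ ω, f k ω ∂P ≤ C * r ^ k) :
    ∀ᵐ ω ∂P, ∃ S ≠ ∞, ∀ k, f k ω ≤ S * d ^ k := by
  have hd0 : d ≠ 0 := hrd.ne_bot
  have hratio : r / d < 1 := ENNReal.div_lt_of_lt_mul (by rwa [one_mul])
  have hmeas : ∀ k, AEMeasurable (fun ω => f k ω / d ^ k) P := fun k => (hf k).div_const _
  have hterm : ∀ k, ∫⁻ ω, f k ω / d ^ k ∂P ≤ C * (r / d) ^ k := fun k =>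
    calc ∫⁻ ω, f k ω / d ^ k ∂P = (∫⁻ ω, f k ω ∂P) / d ^ k := by
          simp only [div_eq_mul_inv, lintegral_mul_const'' _ (hf k)]
      _ ≤ C * r ^ k / d ^ k := ENNReal.div_le_div_right (hfC k) _
      _ = C * (r / d) ^ k := by
          simp only [div_eq_mul_inv, mul_pow, ENNReal.inv_pow, mul_assoc]
  have hint : ∫⁻ ω, ∑' k, f k ω / d ^ k ∂P ≠ ∞ := by
    rw [lintegral_tsum hmeas]
    exact ne_top_of_le_ne_top (tsum_mul_pow_ne_top hC hratio) (ENNReal.tsum_le_tsum hterm)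
  filter_upwards [ae_lt_top' (AEMeasurable.tsum hmeas) hint] with ω hω
  exact ⟨_, hω.ne, fun k => (ENNReal.div_le_iff (pow_ne_zero k hd0) (pow_ne_top hd)).1
    (ENNReal.le_tsum k)⟩

theorem lintegral_prod_rpow_eq_prod_lintegral_rpow {ι : Type*} [Fintype ι] {X : ι → Ω → ℝ≥0∞}
    (hindep : ProbabilityTheory.iIndepFun X P) (hX : ∀ i, Measurable (X i)) {p : ℝ} (hp : 0 ≤ p) :
    ∫⁻ ω, (∏ i, X i ω) ^ p ∂P = ∏ i, ∫⁻ ω, X i ω ^ p ∂P := by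
  simp only [← ENNReal.prod_rpow_of_nonneg hp]
  exact ProbabilityTheory.lintegral_prod_eq_prod_lintegral_of_indepFun Finset.univ _
    (hindep.comp (fun _ x => x ^ p) fun _ => by fun_prop) fun i => (hX i).pow_const p

theorem lintegral_ofReal_rpow_eq_ofReal_integral {f : Ω → ℝ} {p : ℝ} (hf : ∀ ω, 0 ≤ f ω)
    (hp : 0 ≤ p) (hint : Integrable (fun ω => f ω ^ p) P) :
    ∫⁻ ω, ENNReal.ofReal (f ω) ^ p ∂P = ENNReal.ofReal (∫ ω, f ω ^ p ∂P) := by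
  rw [ofReal_integral_eq_lintegral_ofReal hint (ae_of_all _ fun ω => Real.rpow_nonneg (hf ω) p)]
  exact lintegral_congr fun ω => ofReal_rpow_of_nonneg (hf ω) hp

theorem lintegral_ofReal_prod_rpow_le {ι : Type*} [Fintype ι] {X : ι → Ω → ℝ} {p m : ℝ}
    (hindep : ProbabilityTheory.iIndepFun X P) (hnonneg : ∀ i ω, 0 ≤ X i ω)
    (hX : ∀ i, Measurable (X i)) (hp : 0 ≤ p) (hint : ∀ i, Integrable (fun ω => X i ω ^ p) P)
    (hm : ∀ i, ∫ ω, X i ω ^ p ∂P ≤ m) :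
    ∫⁻ ω, ENNReal.ofReal (∏ i, X i ω) ^ p ∂P ≤ ENNReal.ofReal m ^ Fintype.card ι :=
  calc ∫⁻ ω, ENNReal.ofReal (∏ i, X i ω) ^ p ∂P
      = ∫⁻ ω, (∏ i, ENNReal.ofReal (X i ω)) ^ p ∂P := by
        simp only [ofReal_prod_of_nonneg fun i _ => hnonneg i _]
    _ = ∏ i, ∫⁻ ω, ENNReal.ofReal (X i ω) ^ p ∂P :=
        lintegral_prod_rpow_eq_prod_lintegral_rpow
          (hindep.comp (fun _ => ENNReal.ofReal) fun _ => measurable_ofReal)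
          (fun i => (hX i).ennreal_ofReal) hp
    _ ≤ ENNReal.ofReal m ^ Fintype.card ι :=
        Finset.prod_le_pow_card _ _ _ fun i _ =>
          (lintegral_ofReal_rpow_eq_ofReal_integral (hnonneg i) hp (hint i)).trans_le
            (ofReal_le_ofReal (hm i))

end Moments

section Words

variable {Ω α : Type*} [MeasurableSpace Ω] {P : Measure Ω}

theorem take_fin_injective (w : List α) :
    Function.Injective fun k : Fin (w.length + 1) => w.take k := by
  intro j k hjk
  have hlen := congrArg List.length hjk
  simp only [List.length_take] at hlen
  omega

variable [Fintype α]

theorem lintegral_sum_ofFn_rpow_le {Y : List α → Ω → ℝ≥0∞} {p : ℝ} {C m : ℝ≥0∞}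
    (hY : ∀ w, AEMeasurable (Y w) P) (hmom : ∀ w, ∫⁻ ω, Y w ω ^ p ∂P ≤ C * m ^ w.length) (k : ℕ) :
    ∫⁻ ω, ∑ v : Fin k → α, Y (List.ofFn v) ω ^ p ∂P ≤ C * (Fintype.card α * m) ^ k :=
  calc ∫⁻ ω, ∑ v : Fin k → α, Y (List.ofFn v) ω ^ p ∂P
      = ∑ v : Fin k → α, ∫⁻ ω, Y (List.ofFn v) ω ^ p ∂P :=
        lintegral_finsetSum' _ fun v _ => (hY _).pow_const p
    _ ≤ ∑ _v : Fin k → α, C * m ^ k :=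
        Finset.sum_le_sum fun v _ => by simpa only [List.length_ofFn] using hmom (List.ofFn v)
    _ = C * (Fintype.card α * m) ^ k := by
        simp only [Finset.sum_const, Finset.card_univ, Fintype.card_pi_const, nsmul_eq_mul,
          Nat.cast_pow]
        ring

theorem ae_tendsto_iSup_tsum_ofFn_of_lintegral_rpow_le {Y : List α → Ω → ℝ≥0∞} {p : ℝ}
    {C m : ℝ≥0∞} (hY : ∀ w, AEMeasurable (Y w) P) (hp : 0 < p) (hC : C ≠ ∞)
    (hmom : ∀ w, ∫⁻ ω, Y w ω ^ p ∂P ≤ C * m ^ w.length) (hm : Fintype.card α * m < 1) :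
    ∀ᵐ ω ∂P, Tendsto (fun ℓ : ℕ => ⨆ u : ℕ → α, ∑' k : ℕ,
      if ℓ ≤ k then Y (List.ofFn fun i : Fin k => u i) ω else 0) atTop (nhds 0) := by
  obtain ⟨d, hmd, hd⟩ := exists_between hm
  filter_upwards [ae_exists_forall_le_mul_pow_of_lintegral_le
    (fun k => Finset.aemeasurable_fun_sum _ fun v _ => (hY (List.ofFn v)).pow_const p)
    hC hmd (hd.trans one_lt_top).ne (lintegral_sum_ofFn_rpow_le hY hmom)] with ω ⟨S, hS, hle⟩
  have hmax : ∀ (k : ℕ) (v : Fin k → α),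
      Y (List.ofFn v) ω ≤ (∑ v : Fin k → α, Y (List.ofFn v) ω ^ p) ^ p⁻¹ := fun k v =>
    (le_rpow_inv_iff hp).2 <|
      Finset.single_le_sum (f := fun v : Fin k → α => Y (List.ofFn v) ω ^ p)
        (fun _ _ => zero_le) (Finset.mem_univ v)
  exact tendsto_iSup_tsum_ite_le_of_le (fun u k => hmax k fun i => u i)
    (tsum_rpow_ne_top_of_le_mul_pow hS hd (inv_pos.2 hp) hle)

theorem cascade_tail_sums_tendsto_zero_general (ξ : List α → Ω → ℝ)
    (hnonneg : ∀ w ω, 0 ≤ ξ w ω) (hmeas : ∀ w, Measurable (ξ w))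
    (hindep : ∀ w : List α,
      ProbabilityTheory.iIndepFun (fun k : Fin (w.length + 1) => ξ (w.take k)) P)
    {p m : ℝ} (hp : 0 < p) (hint : ∀ w, Integrable (fun ω => ξ w ω ^ p) P)
    (hm : ∀ w, ∫ ω, ξ w ω ^ p ∂P ≤ m) (Z : List α → Ω → ℝ)
    (hZ : ∀ w ω, Z w ω = ∏ k ∈ Finset.range (w.length + 1), ξ (w.take k) ω)
    (hcard : Fintype.card α * m < 1) :
    ∀ᵐ ω ∂P, Tendsto
      (fun ℓ : ℕ => ⨆ u : ℕ → α, ∑' k : ℕ,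
        if ℓ ≤ k then ENNReal.ofReal (Z (List.ofFn fun i : Fin k => u i) ω) else 0)
      atTop (nhds 0) := by
  have hcard' : (Fintype.card α : ℝ≥0∞) * ENNReal.ofReal m < 1 := by
    rwa [← ofReal_natCast, ← ofReal_mul (Nat.cast_nonneg _), ofReal_lt_one]
  have hZmeas (w : List α) : Measurable (Z w) := by
    simpa only [← hZ] using
      Finset.measurable_fun_prod (Finset.range (w.length + 1)) fun k _ => hmeas (w.take k)
  have hZmom (w : List α) : ∫⁻ ω, ENNReal.ofReal (Z w ω) ^ p ∂P
      ≤ ENNReal.ofReal m * ENNReal.ofReal m ^ w.length := by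
    simpa only [hZ, Finset.prod_range, Fintype.card_fin, pow_succ'] using
      lintegral_ofReal_prod_rpow_le (hindep w) (fun _ => hnonneg _) (fun _ => hmeas _) hp.le
        (fun _ => hint _) (fun _ => hm _)
  exact ae_tendsto_iSup_tsum_ofFn_of_lintegral_rpow_le (Y := fun w ω => ENNReal.ofReal (Z w ω))
    (fun w => (hZmeas w).ennreal_ofReal.aemeasurable) hp ofReal_ne_top hZmom hcard'

end Words

/-- Multiplicative cascade tail-sum estimate: with `(ξ w)` i.i.d. nonnegative random variables
indexed by finite words on `{1,2}`, `m = E[ξ_∅^{5/2}] < 1/2`, and `Z w` the product of the `ξ`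
over the prefixes of `w`, almost surely the supremum over all infinite sequences
`u ∈ {1,2}^ℕ` of the tail sums `∑_{k ≥ ℓ} Z([u]_k)` (taken in `[0,∞]`) tends to `0` as
`ℓ → ∞`. -/
theorem cascade_tail_sums_tendsto_zero
    {Ω : Type*} [MeasurableSpace Ω] (P : Measure Ω) [IsProbabilityMeasure P]
    (ξ : List (Fin 2) → Ω → ℝ)
    (hnonneg : ∀ w ω, 0 ≤ ξ w ω)
    (hmeas : ∀ w, Measurable (ξ w))
    (hindep : ProbabilityTheory.iIndepFun ξ P)
    (hident : ∀ w : List (Fin 2), P.map (ξ w) = P.map (ξ []))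
    (hint : Integrable (fun ω => ξ [] ω ^ ((5 : ℝ) / 2)) P)
    (m : ℝ) (hm : m = ∫ ω, ξ [] ω ^ ((5 : ℝ) / 2) ∂P)
    (Z : List (Fin 2) → Ω → ℝ)
    (hZ : ∀ w ω, Z w ω = ∏ k ∈ Finset.range (w.length + 1), ξ (w.take k) ω)
    (hm12 : m < 1 / 2) :
    ∀ᵐ ω ∂P, Tendsto
      (fun ℓ : ℕ => ⨆ u : ℕ → Fin 2, ∑' k : ℕ,
        if ℓ ≤ k then ENNReal.ofReal (Z (List.ofFn fun i : Fin k => u i) ω) else 0)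
      atTop (nhds 0) := by
  have hident_rpow (w : List (Fin 2)) : ProbabilityTheory.IdentDistrib
      (fun ω => ξ w ω ^ ((5 : ℝ) / 2)) (fun ω => ξ [] ω ^ ((5 : ℝ) / 2)) P P :=
    .comp ⟨(hmeas w).aemeasurable, (hmeas []).aemeasurable, hident w⟩
      (measurable_id.pow_const ((5 : ℝ) / 2))
  exact cascade_tail_sums_tendsto_zero_general ξ hnonneg hmeas
    (fun w => hindep.precomp (take_fin_injective w)) (by norm_num)
    (fun w => (hident_rpow w).integrable_iff.2 hint)
    (fun w => ((hident_rpow w).integral_eq.trans hm.symm).le) Z hZ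
    (by rw [Fintype.card_fin]; push_cast; linarith)
end
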